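/- Let a, b, c be pairwise coprime positive integers with c² = a² + b² + ab, and let m be a positive integer such that the equilateral triangle with side length m·ab tiles into m²·ab congruent copies of the triangle with side lengths (a, b, c). Then the triangle with side lengths (m·a·b, m·a·c, m·a·(a+b)) tiles into m²·a·(a+b) congruent copies of the triangle with side lengths (a, b, c). -/

import Mathlib

noncomputable section

abbrev Plane := EuclideanSpace ℝ (Fin 2)

/-- The point (x, y) in the Euclidean plane. -/
def pt (x y : ℝ) : Plane := (WithLp.equiv 2 (Fin 2 → ℝ)).symm ![x, y]

/-- `Δ` is a triangle with side lengths `(p, q, r)`: the convex hull of points `P, Q, R`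
with `dist Q R = p`, `dist P R = q`, `dist P Q = r`. -/
def IsTriangle (p q r : ℝ) (Δ : Set Plane) : Prop :=
  ∃ P Q R : Plane, dist Q R = p ∧ dist P R = q ∧ dist P Q = r ∧
    Δ = convexHull ℝ {P, Q, R}

/-- `S` tiles into `N` congruent copies of the `(p, q, r)` triangle: there are isometries
`f 1, …, f N` of the plane and a triangle `Δ` with side lengths `(p, q, r)` such that
`S` is the union of the `f i '' Δ` and their interiors are pairwise disjoint. -/
def TilesInto (S : Set Plane) (N : ℕ) (p q r : ℝ) : Prop :=
  ∃ (f : Fin N → Plane ≃ᵢ Plane) (Δ : Set Plane),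
    IsTriangle p q r Δ ∧
    S = ⋃ i, f i '' Δ ∧
    ∀ i j : Fin N, i ≠ j → interior (f i '' Δ) ∩ interior (f j '' Δ) = ∅

/-- The equilateral triangle with side length `X`. -/
def EquilateralTri (X : ℝ) : Set Plane :=
  convexHull ℝ {pt 0 0, pt X 0, pt (X/2) (X * Real.sqrt 3 / 2)}

/-! Let `Δ` have vertices `P, Q, R` with `QR = n b`, `PR = n c`, `PQ = n (a + b)`, where `n = m a`,
and let `S` be the point of `PQ` with `PS = n a` and `SQ = n b`. Stewart's theorem and
`c² = a² + b² + a b` give `SR = n b`. Hence the segment `SR` cuts `Δ` into the equilateral triangle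
`SQR` of side `n b`, which is tiled by hypothesis, and the triangle `RPS` with sides `n a`, `n b`,
`n c`, which the lines parallel to its sides cut into `n²` copies of the tile. The tile of one
tiling is carried to the tile of the other by an isometry, so together the two tilings tile `Δ`. -/

section Reflection

variable {V P : Type*} [NormedAddCommGroup V] [InnerProductSpace ℝ V] [MetricSpace P]
  [NormedAddTorsor V P]

include V

theorem exists_isometryEquiv_apply_eq_of_equidistant_fixed (p q : P) :
    ∃ g : P ≃ᵢ P, g p = q ∧ ∀ x, dist x p = dist x q → g x = x := by
  let s := AffineSubspace.perpBisector p q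
  have hdir : s.direction = (ℝ ∙ (q -ᵥ p))ᗮ := AffineSubspace.direction_perpBisector p q
  have : s.direction.HasOrthogonalProjection := by rw [hdir]; infer_instance
  have : Nonempty s := AffineSubspace.perpBisector_nonempty.to_subtype
  have hnormal : p -ᵥ midpoint ℝ p q ∈ s.directionᗮ := by
    rw [hdir, left_vsub_midpoint, ← neg_vsub_eq_vsub_rev q p, smul_neg]
    exact neg_mem (Submodule.smul_mem _ _
      (Submodule.le_orthogonal_orthogonal _ (Submodule.mem_span_singleton_self _)))
  refine ⟨(EuclideanGeometry.reflection s).toIsometryEquiv, ?_, fun x hx ↦ ?_⟩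
  · have hreflect := EuclideanGeometry.reflection_orthogonal_vadd
      (AffineSubspace.midpoint_mem_perpBisector p q) hnormal
    rwa [vsub_vadd, neg_vsub_eq_vsub_rev, midpoint_vsub_left, ← right_vsub_midpoint,
      vsub_vadd] at hreflect
  · exact (EuclideanGeometry.reflection_eq_self_iff x).2
      (AffineSubspace.mem_perpBisector_iff_dist_eq.2 hx)

theorem exists_isometryEquiv_apply_eq_of_dist_eq {A B C A' B' C' : P}
    (hBC : dist B C = dist B' C') (hAC : dist A C = dist A' C') (hAB : dist A B = dist A' B') :
    ∃ g : P ≃ᵢ P, g A = A' ∧ g B = B' ∧ g C = C' := by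
  obtain ⟨g₁, hA, -⟩ := exists_isometryEquiv_apply_eq_of_equidistant_fixed A A'
  obtain ⟨g₂, hB, fix₂⟩ := exists_isometryEquiv_apply_eq_of_equidistant_fixed (g₁ B) B'
  obtain ⟨g₃, hC, fix₃⟩ := exists_isometryEquiv_apply_eq_of_equidistant_fixed (g₂ (g₁ C)) C'
  -- A point already in place is equidistant from the two points the next reflection exchanges.
  have hA₂ : g₂ A' = A' := fix₂ A' <| by rw [← hA, g₁.dist_eq, hA, hAB]
  have hA₃ : g₃ A' = A' := fix₃ A' <| calc
    dist A' (g₂ (g₁ C)) = dist (g₂ (g₁ A)) (g₂ (g₁ C)) := by rw [hA, hA₂]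
    _ = dist A' C' := by rw [g₂.dist_eq, g₁.dist_eq, hAC]
  have hB₃ : g₃ B' = B' := fix₃ B' <| calc
    dist B' (g₂ (g₁ C)) = dist (g₂ (g₁ B)) (g₂ (g₁ C)) := by rw [hB]
    _ = dist B' C' := by rw [g₂.dist_eq, g₁.dist_eq, hBC]
  refine ⟨(g₁.trans g₂).trans g₃, ?_, ?_, hC⟩
  · simp only [IsometryEquiv.trans_apply, hA, hA₂, hA₃]
  · simp only [IsometryEquiv.trans_apply, hB, hB₃]

end Reflection

theorem isometryEquiv_image_convexHull {E F : Type*} [NormedAddCommGroup E] [NormedSpace ℝ E]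
    [NormedAddCommGroup F] [NormedSpace ℝ F] (g : E ≃ᵢ F) (s : Set E) :
    g '' convexHull ℝ s = convexHull ℝ (g '' s) :=
  g.toRealAffineIsometryEquiv.toAffineEquiv.toAffineMap.image_convexHull s

theorem IsTriangle.exists_isometryEquiv_image_eq {p q r : ℝ} {Δ Δ' : Set Plane}
    (h : IsTriangle p q r Δ) (h' : IsTriangle p q r Δ') : ∃ g : Plane ≃ᵢ Plane, g '' Δ = Δ' := by
  obtain ⟨A, B, C, hBC, hAC, hAB, rfl⟩ := h
  obtain ⟨A', B', C', hBC', hAC', hAB', rfl⟩ := h'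
  obtain ⟨g, hA, hB, hC⟩ := exists_isometryEquiv_apply_eq_of_dist_eq
    (hBC.trans hBC'.symm) (hAC.trans hAC'.symm) (hAB.trans hAB'.symm)
  refine ⟨g, ?_⟩
  rw [isometryEquiv_image_convexHull, Set.image_insert_eq, Set.image_pair, hA, hB, hC]

section TilesInto

variable {p q r : ℝ} {S T Δ Δ' : Set Plane} {M N : ℕ}

theorem TilesInto.of_fintype {ι : Type*} [Fintype ι] (f : ι → Plane ≃ᵢ Plane)
    (hΔ : IsTriangle p q r Δ) (hcover : S = ⋃ i, f i '' Δ)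
    (hdisj : Pairwise fun i j ↦ Disjoint (interior (f i '' Δ)) (interior (f j '' Δ))) :
    TilesInto S (Fintype.card ι) p q r := by
  let e := (Fintype.equivFin ι).symm
  refine ⟨fun i ↦ f (e i), Δ, hΔ, ?_, fun i j hij ↦ ?_⟩
  · rw [hcover, ← e.surjective.iUnion_comp]
  · exact (hdisj (e.injective.ne hij)).inter_eq

theorem TilesInto.image (hS : TilesInto S N p q r) (g : Plane ≃ᵢ Plane) :
    TilesInto (g '' S) N p q r := by
  obtain ⟨f, D, hD, rfl, hdisj⟩ := hS
  have himage (i : Fin N) : (f i).trans g '' D = g '' (f i '' D) := Set.image_comp g (f i) D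
  have hinterior (s : Set Plane) : interior (g '' s) = g '' interior s :=
    (g.toHomeomorph.image_interior s).symm
  refine ⟨fun i ↦ (f i).trans g, D, hD, ?_, fun i j hij ↦ ?_⟩
  · simp only [himage, Set.image_iUnion]
  · simp only [himage, hinterior, ← Set.image_inter g.injective, hdisj i j hij, Set.image_empty]

theorem TilesInto.of_isTriangle {x y z : ℝ} (h : TilesInto Δ N p q r) (hΔ : IsTriangle x y z Δ)
    (hΔ' : IsTriangle x y z Δ') : TilesInto Δ' N p q r := by
  obtain ⟨g, rfl⟩ := hΔ.exists_isometryEquiv_image_eq hΔ'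
  exact h.image g

theorem TilesInto.union (hS : TilesInto S M p q r) (hT : TilesInto T N p q r)
    (hST : Disjoint (interior S) (interior T)) : TilesInto (S ∪ T) (M + N) p q r := by
  obtain ⟨f, D, hD, rfl, hf⟩ := hS
  obtain ⟨f', D', hD', rfl, hf'⟩ := hT
  obtain ⟨g, rfl⟩ := hD.exists_isometryEquiv_image_eq hD'
  have himage (j : Fin N) : g.trans (f' j) '' D = f' j '' (g '' D) := Set.image_comp (f' j) g D
  have hcross (i : Fin M) (j : Fin N) :
      Disjoint (interior (f i '' D)) (interior (f' j '' (g '' D))) :=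
    hST.mono (interior_mono (Set.subset_iUnion (fun i ↦ f i '' D) i))
      (interior_mono (Set.subset_iUnion (fun j ↦ f' j '' (g '' D)) j))
  let F : Fin M ⊕ Fin N → Plane ≃ᵢ Plane := Sum.elim f fun j ↦ g.trans (f' j)
  have hcover : (⋃ i, f i '' D) ∪ ⋃ j, f' j '' (g '' D) = ⋃ k, F k '' D := by
    simp only [F, Set.iUnion_sum, Sum.elim_inl, Sum.elim_inr, himage]
  have hdisj : Pairwise fun k l ↦ Disjoint (interior (F k '' D)) (interior (F l '' D)) := by
    rintro (i | i) (j | j) hij <;> simp only [F, Sum.elim_inl, Sum.elim_inr, himage]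
    · exact Set.disjoint_iff_inter_eq_empty.2 (hf i j (ne_of_apply_ne Sum.inl hij))
    · exact hcross i j
    · exact (hcross j i).symm
    · exact Set.disjoint_iff_inter_eq_empty.2 (hf' i j (ne_of_apply_ne Sum.inr hij))
  simpa only [Fintype.card_sum, Fintype.card_fin] using TilesInto.of_fintype F hD hcover hdisj

end TilesInto

section Interior

theorem disjoint_interior_of_le_of_ge {E : Type*} [AddCommGroup E] [Module ℝ E]
    [TopologicalSpace E] [ContinuousAdd E] [ContinuousSMul ℝ E] {f : StrongDual ℝ E} (hf : f ≠ 0)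
    {S T : Set E} {t : ℝ} (hS : ∀ x ∈ S, f x ≤ t) (hT : ∀ x ∈ T, t ≤ f x) :
    Disjoint (interior S) (interior T) := by
  have hopen := f.isOpenMap_of_ne_zero hf
  have hS' : interior S ⊆ f ⁻¹' Set.Iio t := by
    rw [← interior_Iic, hopen.preimage_interior_eq_interior_preimage f.continuous]
    exact interior_mono hS
  have hT' : interior T ⊆ f ⁻¹' Set.Ioi t := by
    rw [← interior_Ici, hopen.preimage_interior_eq_interior_preimage f.continuous]
    exact interior_mono hT
  have hdisj : Disjoint (Set.Iio t) (Set.Ioi t) :=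
    (Set.Iic_disjoint_Ioi le_rfl).mono_left Set.Iio_subset_Iic_self
  exact (hdisj.preimage f).mono hS' hT'

variable {E F : Type*} [NormedAddCommGroup E] [NormedSpace ℝ E]
  [NormedAddCommGroup F] [NormedSpace ℝ F] [FiniteDimensional ℝ F]

theorem interior_range_affineMap_eq_empty {φ : E →ᵃ[ℝ] F} (hφ : ¬Function.Surjective φ) :
    interior (Set.range φ) = ∅ := by
  by_contra hne
  have hconvex : Convex ℝ (Set.range φ) := by
    simpa only [Set.image_univ] using convex_univ.affine_image φ
  have hspan := hconvex.interior_nonempty_iff_affineSpan_eq_top.1 (Set.nonempty_iff_ne_empty.2 hne)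
  rw [← Set.image_univ, ← AffineSubspace.map_span, AffineSubspace.span_univ] at hspan
  refine hφ fun y ↦ ?_
  have hy : y ∈ (⊤ : AffineSubspace ℝ E).map φ := hspan ▸ AffineSubspace.mem_top ℝ F y
  obtain ⟨x, -, hx⟩ := AffineSubspace.mem_map.1 hy
  exact ⟨x, hx⟩

theorem disjoint_interior_affineMap_image [FiniteDimensional ℝ E] (φ : E →ᵃ[ℝ] F)
    (hEF : Module.finrank ℝ E = Module.finrank ℝ F) {S T : Set E}
    (hST : Disjoint (interior S) (interior T)) :
    Disjoint (interior (φ '' S)) (interior (φ '' T)) := by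
  by_cases hφ : Function.Surjective φ
  · have hinj : Function.Injective φ := φ.linear_injective_iff.1
      ((LinearMap.injective_iff_surjective_of_finrank_eq_finrank hEF).2
        (φ.linear_surjective_iff.2 hφ))
    let e := (AffineEquiv.ofBijective ⟨hinj, hφ⟩).toContinuousAffineEquiv.toHomeomorph
    have himage (s : Set E) : interior (φ '' s) = φ '' interior s := (e.image_interior s).symm
    rw [himage, himage]
    exact (Set.disjoint_image_iff hinj).2 hST
  · have hempty : interior (φ '' S) = ∅ := Set.subset_empty_iff.1
      ((interior_mono (Set.image_subset_range φ S)).trans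
        (interior_range_affineMap_eq_empty hφ).subset)
    rw [hempty]
    exact Set.empty_disjoint _

end Interior

section Grid

/-- The standard right isosceles triangle with legs of length `t` on the coordinate axes, the model
whose affine images are all triangles. -/
def cornerTriangle (t : ℝ) : Set (ℝ × ℝ) := {p | 0 ≤ p.1 ∧ 0 ≤ p.2 ∧ p.1 + p.2 ≤ t}

/-- The half below the antidiagonal of the unit square with lower left corner `(i, j)`. -/
def upCell (i j : ℕ) : Set (ℝ × ℝ) := {p | (i : ℝ) ≤ p.1 ∧ (j : ℝ) ≤ p.2 ∧ p.1 + p.2 ≤ i + j + 1}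

/-- The half above the antidiagonal of the unit square with lower left corner `(i, j)`. -/
def downCell (i j : ℕ) : Set (ℝ × ℝ) :=
  {p | p.1 ≤ i + 1 ∧ p.2 ≤ j + 1 ∧ (i : ℝ) + j + 1 ≤ p.1 + p.2}

/-- The `n ^ 2` cells of the subdivision of `cornerTriangle n`, indexed by the unit squares of
`[0, n] ^ 2`: a square that meets `{p | p.1 + p.2 < n}` stands for its own lower half, any other
one for the upper half of its image under `p ↦ (n, n) - p`. -/
def gridCell (n : ℕ) (k : Fin n × Fin n) : Set (ℝ × ℝ) :=
  if (k.1 + k.2 : ℕ) < n then upCell k.1 k.2 else downCell k.1.rev k.2.rev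

theorem cornerTriangle_eq_convexHull {t : ℝ} (ht : 0 < t) :
    cornerTriangle t = convexHull ℝ {0, (t, 0), (0, t)} := by
  refine Set.Subset.antisymm (fun ⟨x, y⟩ ⟨hx, hy, hxy⟩ ↦ ?_) (convexHull_min ?_ ?_)
  · simp only at hx hy hxy
    refine mem_convexHull_of_exists_fintype ![1 - x / t - y / t, x / t, y / t]
      ![0, (t, 0), (0, t)] ?_ ?_ ?_ ?_
    · have hle : x / t + y / t ≤ 1 := by rw [← add_div]; exact (div_le_one ht).2 hxy
      intro i
      fin_cases i
      exacts [show 0 ≤ 1 - x / t - y / t by linarith, div_nonneg hx ht.le, div_nonneg hy ht.le]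
    · simp only [Fin.sum_univ_three, Matrix.cons_val]
      ring
    · simp [Fin.forall_fin_succ]
    · simp [Fin.sum_univ_three, ht.ne']
  · rintro _ (rfl | rfl | rfl) <;> simp [cornerTriangle, ht.le]
  · rintro ⟨x, y⟩ ⟨hx, hy, hxy⟩ ⟨x', y'⟩ ⟨hx', hy', hxy'⟩ u v hu hv huv
    simp only [cornerTriangle, Set.mem_ofPred_eq, Prod.smul_mk, Prod.mk_add_mk, smul_eq_mul] at *
    refine ⟨by positivity, by positivity, ?_⟩
    calc u * x + v * x' + (u * y + v * y') = u * (x + y) + v * (x' + y') := by ring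
      _ ≤ u * t + v * t := by gcongr
      _ = t := by rw [← add_mul, huv, one_mul]

theorem upCell_subset_Icc (i j : ℕ) : upCell i j ⊆ Set.Icc (i, j) (i + 1, j + 1) := by
  rintro ⟨x, y⟩ ⟨hx, hy, hxy⟩
  refine ⟨⟨hx, hy⟩, ?_, ?_⟩ <;> simp only at * <;> linarith

theorem downCell_subset_Icc (i j : ℕ) : downCell i j ⊆ Set.Icc (i, j) (i + 1, j + 1) := by
  rintro ⟨x, y⟩ ⟨hx, hy, hxy⟩
  refine ⟨⟨?_, ?_⟩, hx, hy⟩ <;> simp only at * <;> linarith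

theorem disjoint_interior_Icc_natCast {i j i' j' : ℕ} (h : (i, j) ≠ (i', j')) :
    Disjoint (interior (Set.Icc ((i : ℝ), (j : ℝ)) (i + 1, j + 1)))
      (interior (Set.Icc ((i' : ℝ), (j' : ℝ)) (i' + 1, j' + 1))) := by
  have hunit {k k' : ℕ} (hk : k ≠ k') : Disjoint (Set.Ioo (k : ℝ) (k + 1)) (Set.Ioo k' (k' + 1)) :=
    mod_cast Set.pairwise_disjoint_Ioo_intCast ℝ (Nat.cast_injective.ne hk)
  simp only [← Set.Icc_prod_Icc, interior_prod_eq, interior_Icc]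
  refine Set.disjoint_prod.2 ?_
  by_cases hi : i = i'
  · exact .inr (hunit fun hj ↦ h (Prod.ext hi hj))
  · exact .inl (hunit hi)

theorem disjoint_interior_upCell_downCell (i j i' j' : ℕ) :
    Disjoint (interior (upCell i j)) (interior (downCell i' j')) := by
  by_cases h : (i, j) = (i', j')
  · obtain ⟨rfl, rfl⟩ := Prod.mk.inj h
    have hsum : ContinuousLinearMap.fst ℝ ℝ ℝ + ContinuousLinearMap.snd ℝ ℝ ℝ ≠ 0 :=
      fun h0 ↦ by simpa using DFunLike.congr_fun h0 (1, 0)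
    exact disjoint_interior_of_le_of_ge hsum (fun p hp ↦ hp.2.2) (fun p hp ↦ hp.2.2)
  · exact (disjoint_interior_Icc_natCast h).mono (interior_mono (upCell_subset_Icc i j))
      (interior_mono (downCell_subset_Icc i' j'))

theorem pairwise_disjoint_interior_gridCell (n : ℕ) :
    Pairwise fun k l ↦ Disjoint (interior (gridCell n k)) (interior (gridCell n l)) := by
  rintro ⟨i, j⟩ ⟨i', j'⟩ hne
  unfold gridCell
  split_ifs
  · have hval : ((i : ℕ), (j : ℕ)) ≠ (↑i', ↑j') := by
      simpa only [ne_eq, Prod.mk.injEq, Fin.ext_iff] using hne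
    exact (disjoint_interior_Icc_natCast hval).mono (interior_mono (upCell_subset_Icc i j))
      (interior_mono (upCell_subset_Icc i' j'))
  · exact disjoint_interior_upCell_downCell ..
  · exact (disjoint_interior_upCell_downCell ..).symm
  · have hval : ((i.rev : ℕ), (j.rev : ℕ)) ≠ (↑i'.rev, ↑j'.rev) := by
      simpa only [ne_eq, Prod.mk.injEq, ← Fin.ext_iff, Fin.rev_inj] using hne
    exact (disjoint_interior_Icc_natCast hval).mono
      (interior_mono (downCell_subset_Icc i.rev j.rev))
      (interior_mono (downCell_subset_Icc i'.rev j'.rev))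

theorem gridCell_subset_cornerTriangle (n : ℕ) (k : Fin n × Fin n) :
    gridCell n k ⊆ cornerTriangle n := by
  unfold gridCell
  split_ifs with hk
  · rintro p ⟨hx, hy, hxy⟩
    have hk' : (k.1 + k.2 + 1 : ℝ) ≤ n := mod_cast hk
    exact ⟨k.1.val.cast_nonneg.trans hx, k.2.val.cast_nonneg.trans hy, hxy.trans hk'⟩
  · rintro p ⟨hx, hy, hxy⟩
    have hk' : ((k.1.rev + 1 + (k.2.rev + 1) : ℕ) : ℝ) ≤ n := by
      rw [Nat.cast_le, Fin.val_rev, Fin.val_rev]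
      omega
    push_cast at hk'
    exact ⟨by linarith, by linarith, by linarith⟩

theorem upCell_subset_iUnion_gridCell {n i j : ℕ} (h : i + j < n) :
    upCell i j ⊆ ⋃ k, gridCell n k := by
  refine Set.subset_iUnion_of_subset (⟨i, by omega⟩, ⟨j, by omega⟩) ?_
  rw [gridCell, if_pos h]

theorem downCell_subset_iUnion_gridCell {n i j : ℕ} (h : i + j + 1 < n) :
    downCell i j ⊆ ⋃ k, gridCell n k := by
  let i' : Fin n := ⟨i, by omega⟩
  let j' : Fin n := ⟨j, by omega⟩
  have hrev : ¬(i'.rev + j'.rev : ℕ) < n := by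
    simp only [Fin.val_rev, i', j']
    omega
  refine Set.subset_iUnion_of_subset (i'.rev, j'.rev) ?_
  rw [gridCell, if_neg hrev, Fin.rev_rev, Fin.rev_rev]

theorem cornerTriangle_natCast_eq_iUnion_gridCell {n : ℕ} (hn : 0 < n) :
    cornerTriangle n = ⋃ k, gridCell n k := by
  refine Set.Subset.antisymm (fun ⟨x, y⟩ ⟨hx, hy, hxy⟩ ↦ ?_)
    (Set.iUnion_subset (gridCell_subset_cornerTriangle n))
  simp only at hx hy hxy
  have hix := Nat.floor_le hx
  have hjy := Nat.floor_le hy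
  have hxi := Nat.lt_floor_add_one x
  have hyj := Nat.lt_floor_add_one y
  set i := ⌊x⌋₊
  set j := ⌊y⌋₊
  have hij : i + j ≤ n := by exact_mod_cast (add_le_add hix hjy).trans hxy
  rcases hij.lt_or_eq with hlt | heq
  · rcases le_or_gt (x + y) (i + j + 1) with hup | hdown
    · exact upCell_subset_iUnion_gridCell hlt ⟨hix, hjy, hup⟩
    · exact downCell_subset_iUnion_gridCell (mod_cast hdown.trans_le hxy) ⟨hxi.le, hyj.le, hdown.le⟩
  · -- The point is `(i, j)`, on the hypotenuse: it is a corner of a square to its left or below it.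
    obtain ⟨i', j', hi', hj', hij'⟩ : ∃ i' j', i' ≤ i ∧ j' ≤ j ∧ i' + j' + 1 = n :=
      ⟨i - 1, n - 1 - (i - 1), by omega, by omega, by omega⟩
    have hxy' : x + y ≤ (i' : ℝ) + j' + 1 := hxy.trans_eq (mod_cast hij'.symm)
    exact upCell_subset_iUnion_gridCell (by omega)
      ⟨(Nat.cast_le.2 hi').trans hix, (Nat.cast_le.2 hj').trans hjy, hxy'⟩

end Grid

section AffineImage

theorem exists_affineMap_prod_apply_eq {E : Type*} [AddCommGroup E] [Module ℝ E] {t : ℝ}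
    (ht : t ≠ 0) (A B C : E) :
    ∃ φ : ℝ × ℝ →ᵃ[ℝ] E, φ 0 = A ∧ φ (t, 0) = B ∧ φ (0, t) = C := by
  let L : ℝ × ℝ →ₗ[ℝ] E := .coprod (.toSpanSingleton ℝ E (t⁻¹ • (B - A)))
    (.toSpanSingleton ℝ E (t⁻¹ • (C - A)))
  refine ⟨L.toAffineMap + AffineMap.const ℝ _ A, ?_, ?_, ?_⟩ <;> simp [L, smul_smul, ht]

theorem dist_affineMap_apply_smul {E F : Type*} [AddCommGroup E] [Module ℝ E]
    [SeminormedAddCommGroup F] [NormedSpace ℝ F] (φ : E →ᵃ[ℝ] F) (t : ℝ) (x y : E) :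
    dist (φ (t • x)) (φ (t • y)) = |t| * dist (φ x) (φ y) := by
  simp_rw [dist_eq_norm_sub, ← vsub_eq_sub, ← φ.linearMap_vsub, vsub_eq_sub, ← smul_sub, map_smul,
    norm_smul, Real.norm_eq_abs]

theorem upCell_eq_image_cornerTriangle (i j : ℕ) :
    upCell i j = (fun p ↦ p + ((i : ℝ), (j : ℝ))) '' cornerTriangle 1 := by
  rw [Set.image_add_right]
  ext ⟨x, y⟩
  change _ ∧ _ ∧ _ ↔ _ ∧ _ ∧ _
  dsimp only [Prod.mk_add_mk, Prod.neg_mk]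
  refine and_congr ?_ (and_congr ?_ ?_) <;> constructor <;> intro h <;> linarith

theorem downCell_eq_image_cornerTriangle (i j : ℕ) :
    downCell i j = (fun p ↦ ((i + 1 : ℝ), (j + 1 : ℝ)) - p) '' cornerTriangle 1 := by
  have hinv : Function.Involutive fun p ↦ ((i + 1 : ℝ), (j + 1 : ℝ)) - p := sub_sub_cancel _
  rw [hinv.image_eq_preimage_symm]
  ext ⟨x, y⟩
  change _ ∧ _ ∧ _ ↔ _ ∧ _ ∧ _
  dsimp only [Prod.mk_sub_mk]
  refine and_congr ?_ (and_congr ?_ ?_) <;> constructor <;> intro h <;> linarith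

theorem exists_isometryEquiv_affineMap_image_gridCell {E : Type*} [SeminormedAddCommGroup E]
    [Module ℝ E] (φ : ℝ × ℝ →ᵃ[ℝ] E) {n : ℕ} (k : Fin n × Fin n) :
    ∃ g : E ≃ᵢ E, φ '' gridCell n k = g '' (φ '' cornerTriangle 1) := by
  rw [gridCell]
  split_ifs
  · rw [upCell_eq_image_cornerTriangle, Set.image_image]
    refine ⟨IsometryEquiv.addLeft (φ.linear (k.1, k.2)), ?_⟩
    rw [Set.image_image]
    refine Set.image_congr fun p _ ↦ ?_
    rw [add_comm p]
    exact φ.map_vadd p _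
  · rw [downCell_eq_image_cornerTriangle, Set.image_image]
    set v : ℝ × ℝ := (k.1.rev + 1, k.2.rev + 1)
    refine ⟨IsometryEquiv.subLeft (φ v + φ 0), ?_⟩
    rw [Set.image_image]
    refine Set.image_congr fun p _ ↦ ?_
    have hlinear : φ (v - p) - φ 0 = φ v - φ p := by
      simp only [← vsub_eq_sub, ← φ.linearMap_vsub]
      rw [vsub_eq_sub _ (0 : ℝ × ℝ), sub_zero]
    rw [IsometryEquiv.subLeft_apply, add_sub_right_comm, ← hlinear, sub_add_cancel]

theorem tilesInto_affineMap_image_cornerTriangle (φ : ℝ × ℝ →ᵃ[ℝ] Plane) {n : ℕ} (hn : 0 < n) :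
    TilesInto (φ '' cornerTriangle n) (n ^ 2) (dist (φ (1, 0)) (φ (0, 1)))
      (dist (φ 0) (φ (0, 1))) (dist (φ 0) (φ (1, 0))) := by
  choose g hg using exists_isometryEquiv_affineMap_image_gridCell φ (n := n)
  have htile : IsTriangle (dist (φ (1, 0)) (φ (0, 1))) (dist (φ 0) (φ (0, 1)))
      (dist (φ 0) (φ (1, 0))) (φ '' cornerTriangle 1) :=
    ⟨φ 0, φ (1, 0), φ (0, 1), rfl, rfl, rfl, by
      rw [cornerTriangle_eq_convexHull one_pos, φ.image_convexHull, Set.image_insert_eq,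
        Set.image_pair]⟩
  have hcover : φ '' cornerTriangle n = ⋃ k, g k '' (φ '' cornerTriangle 1) := by
    simp only [← hg, cornerTriangle_natCast_eq_iUnion_gridCell hn, Set.image_iUnion]
  have hdisj : Pairwise fun k l ↦ Disjoint (interior (g k '' (φ '' cornerTriangle 1)))
      (interior (g l '' (φ '' cornerTriangle 1))) := fun k l hkl ↦ by
    simp only [← hg]
    exact disjoint_interior_affineMap_image φ (by simp) (pairwise_disjoint_interior_gridCell n hkl)
  convert TilesInto.of_fintype g htile hcover hdisj
  rw [Fintype.card_prod, Fintype.card_fin, sq]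

theorem IsTriangle.tilesInto_sq {p q r : ℝ} {Δ : Set Plane} {n : ℕ} (hn : 0 < n)
    (h : IsTriangle (n * p) (n * q) (n * r) Δ) : TilesInto Δ (n ^ 2) p q r := by
  obtain ⟨A, B, C, hBC, hAC, hAB, rfl⟩ := h
  have hn' : (0 : ℝ) < n := Nat.cast_pos.2 hn
  obtain ⟨φ, hA, hB, hC⟩ := exists_affineMap_prod_apply_eq hn'.ne' A B C
  have hscale {x y : ℝ × ℝ} {d : ℝ} (h : dist (φ ((n : ℝ) • x)) (φ ((n : ℝ) • y)) = n * d) :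
      dist (φ x) (φ y) = d := by
    rw [dist_affineMap_apply_smul, abs_of_pos hn'] at h
    exact mul_left_cancel₀ hn'.ne' h
  have h0 : (n : ℝ) • (0 : ℝ × ℝ) = 0 := smul_zero _
  have h1 : (n : ℝ) • ((1 : ℝ), (0 : ℝ)) = (↑n, 0) := by
    rw [Prod.smul_mk, smul_eq_mul, mul_one, smul_zero]
  have h2 : (n : ℝ) • ((0 : ℝ), (1 : ℝ)) = (0, ↑n) := by
    rw [Prod.smul_mk, smul_zero, smul_eq_mul, mul_one]
  have hp : dist (φ (1, 0)) (φ (0, 1)) = p := hscale (by rw [h1, h2, hB, hC, hBC])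
  have hq : dist (φ 0) (φ (0, 1)) = q := hscale (by rw [h0, h2, hA, hC, hAC])
  have hr : dist (φ 0) (φ (1, 0)) = r := hscale (by rw [h0, h1, hA, hB, hAB])
  have himage : φ '' cornerTriangle n = convexHull ℝ {A, B, C} := by
    rw [cornerTriangle_eq_convexHull hn', φ.image_convexHull, Set.image_insert_eq, Set.image_pair,
      hA, hB, hC]
  rw [← himage, ← hp, ← hq, ← hr]
  exact tilesInto_affineMap_image_cornerTriangle φ hn

end AffineImage

section Splitting

theorem segment_eq_union_of_mem {E : Type*} [AddCommGroup E] [Module ℝ E] {x y z : E}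
    (hy : y ∈ segment ℝ x z) : segment ℝ x z = segment ℝ x y ∪ segment ℝ y z := by
  obtain ⟨t, ht, rfl⟩ := segment_eq_image_lineMap ℝ x z ▸ hy
  have hleft : segment ℝ x (AffineMap.lineMap x z t) = AffineMap.lineMap x z '' Set.Icc 0 t := by
    rw [← segment_eq_Icc ht.1, image_segment, AffineMap.lineMap_apply_zero]
  have hright : segment ℝ (AffineMap.lineMap x z t) z = AffineMap.lineMap x z '' Set.Icc t 1 := by
    rw [← segment_eq_Icc ht.2, image_segment, AffineMap.lineMap_apply_one]
  rw [hleft, hright, ← Set.image_union, Set.Icc_union_Icc_eq_Icc ht.1 ht.2,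
    segment_eq_image_lineMap]

theorem convexHull_triple_eq_union_of_mem_segment {E : Type*} [AddCommGroup E] [Module ℝ E]
    {P Q R S : E} (hS : S ∈ segment ℝ P Q) :
    convexHull ℝ {P, Q, R} = convexHull ℝ {P, S, R} ∪ convexHull ℝ {S, Q, R} := by
  have hjoin (A B : E) : convexHull ℝ {A, B, R} = convexJoin ℝ (segment ℝ A B) {R} :=
    (convexJoin_segment_singleton A B R).symm
  rw [hjoin, hjoin, hjoin, segment_eq_union_of_mem hS, convexJoin_union_left]

theorem exists_strongDual_ne_zero_apply_eq_zero {E : Type*} [NormedAddCommGroup E]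
    [NormedSpace ℝ E] (hE : 1 < Module.finrank ℝ E) (v : E) :
    ∃ f : StrongDual ℝ E, f ≠ 0 ∧ f v = 0 := by
  have : FiniteDimensional ℝ E := Module.finite_of_finrank_pos (one_pos.trans hE)
  have hspan : Submodule.span ℝ {v} < ⊤ := by
    refine Submodule.lt_top_of_finrank_lt_finrank ((finrank_span_le_card {v}).trans_lt ?_)
    rwa [Set.toFinset_singleton, Finset.card_singleton]
  obtain ⟨f, hf, hker⟩ := Submodule.exists_le_ker_of_lt_top _ hspan
  exact ⟨f.toContinuousLinearMap, by simpa using hf, hker (Submodule.mem_span_singleton_self v)⟩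

theorem disjoint_interior_convexHull_of_mem_segment {E : Type*} [NormedAddCommGroup E]
    [NormedSpace ℝ E] (hE : 1 < Module.finrank ℝ E) {P Q R S : E} (hS : S ∈ segment ℝ P Q) :
    Disjoint (interior (convexHull ℝ {P, S, R})) (interior (convexHull ℝ {S, Q, R})) := by
  obtain ⟨f, hf, hfRS⟩ := exists_strongDual_ne_zero_apply_eq_zero hE (R - S)
  rw [map_sub, sub_eq_zero] at hfRS
  have hle {T : Set E} (hT : ∀ x ∈ T, f x ≤ f S) : ∀ x ∈ convexHull ℝ T, f x ≤ f S :=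
    convexHull_min hT (convex_halfSpace_le f.isLinear _)
  have hge {T : Set E} (hT : ∀ x ∈ T, f S ≤ f x) : ∀ x ∈ convexHull ℝ T, f S ≤ f x :=
    convexHull_min hT (convex_halfSpace_ge f.isLinear _)
  have hfS : f S ∈ segment ℝ (f P) (f Q) :=
    image_segment ℝ f.toLinearMap.toAffineMap P Q ▸ Set.mem_image_of_mem f hS
  rw [segment_eq_uIcc] at hfS
  rcases Set.mem_uIcc.1 hfS with ⟨hP, hQ⟩ | ⟨hQ, hP⟩
  · exact disjoint_interior_of_le_of_ge hf (hle (by simp [hP, hfRS])) (hge (by simp [hQ, hfRS]))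
  · exact (disjoint_interior_of_le_of_ge hf (hle (by simp [hQ, hfRS]))
      (hge (by simp [hP, hfRS]))).symm

end Splitting

section Distances

theorem exists_sbtw_dist_eq {V P : Type*} [NormedAddCommGroup V] [NormedSpace ℝ V] [MetricSpace P]
    [NormedAddTorsor V P] {A B : P} {s t : ℝ} (hs : 0 < s) (ht : 0 < t) (hAB : dist A B = s + t) :
    ∃ C, Sbtw ℝ A C B ∧ dist A C = s ∧ dist C B = t := by
  have hst : s + t ≠ 0 := (add_pos hs ht).ne'
  have hne : A ≠ B := dist_ne_zero.1 (hAB ▸ hst)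
  have hcompl : 1 - s / (s + t) = t / (s + t) := by rw [one_sub_div hst, add_sub_cancel_left]
  refine ⟨AffineMap.lineMap A B (s / (s + t)), sbtw_lineMap_iff.2 ⟨hne, by positivity, ?_⟩, ?_, ?_⟩
  · exact (div_lt_one (by positivity)).2 (lt_add_of_pos_right s ht)
  · rw [dist_left_lineMap, hAB, Real.norm_of_nonneg (by positivity), div_mul_cancel₀ _ hst]
  · rw [dist_lineMap_right, hAB, hcompl, Real.norm_of_nonneg (by positivity), div_mul_cancel₀ _ hst]

theorem dist_eq_of_sbtw_of_sq_eq {V P : Type*} [NormedAddCommGroup V] [InnerProductSpace ℝ V]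
    [MetricSpace P] [NormedAddTorsor V P] {A B C D : P} {a b c : ℝ}
    (h : c ^ 2 = a ^ 2 + b ^ 2 + a * b) (hD : Sbtw ℝ A D B) (hAD : dist A D = a)
    (hDB : dist D B = b) (hAC : dist A C = c) (hBC : dist B C = b) : dist D C = b := by
  have hAB : dist A B = a + b := by rw [← hD.wbtw.dist_add_dist, hAD, hDB]
  have hab : a + b ≠ 0 := hAB ▸ dist_ne_zero.2 hD.left_ne_right
  have hb : 0 ≤ b := hDB ▸ dist_nonneg
  have stewart := EuclideanGeometry.dist_sq_mul_dist_add_dist_sq_mul_dist C A B D hD.angle₁₂₃_eq_pi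
  rw [dist_comm C A, dist_comm C B, dist_comm C D, dist_comm B D, hAB, hAD, hDB, hAC, hBC]
    at stewart
  have hsq : dist D C ^ 2 = b ^ 2 := by
    refine mul_left_cancel₀ hab ?_
    linear_combination b * h - stewart
  exact (pow_left_inj₀ dist_nonneg hb two_ne_zero).1 hsq

theorem isTriangle_equilateralTri {X : ℝ} (hX : 0 ≤ X) : IsTriangle X X X (EquilateralTri X) := by
  have hdist {x y x' y' : ℝ} (h : (x - x') ^ 2 + (y - y') ^ 2 = X ^ 2) :
      dist (pt x y) (pt x' y') = X := by
    rw [EuclideanSpace.dist_eq, Fin.sum_univ_two]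
    simp only [Real.dist_eq, sq_abs]
    exact (congrArg _ h).trans (Real.sqrt_sq hX)
  have h3 : √3 ^ 2 = (3 : ℝ) := Real.sq_sqrt zero_le_three
  refine ⟨pt 0 0, pt X 0, pt (X / 2) (X * √3 / 2), hdist ?_, hdist ?_, hdist ?_, rfl⟩
  · linear_combination X ^ 2 / 4 * h3
  · linear_combination X ^ 2 / 4 * h3
  · ring

end Distances

theorem stmt16_general {a b c : ℝ} (ha : 0 < a) (hb : 0 < b) (h : c ^ 2 = a ^ 2 + b ^ 2 + a * b)
    {n N : ℕ} (hn : 0 < n) (heq : TilesInto (EquilateralTri (n * b)) N a b c) {Δ : Set Plane}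
    (hΔ : IsTriangle (n * b) (n * c) (n * (a + b)) Δ) : TilesInto Δ (N + n ^ 2) a b c := by
  obtain ⟨P, Q, R, hQR, hPR, hPQ, rfl⟩ := hΔ
  have hna : 0 < n * a := by positivity
  have hnb : 0 < n * b := by positivity
  obtain ⟨S, hS, hPS, hSQ⟩ := exists_sbtw_dist_eq hna hnb (hPQ.trans (mul_add _ _ _))
  have hSR : dist S R = n * b :=
    dist_eq_of_sbtw_of_sq_eq (by linear_combination (n : ℝ) ^ 2 * h) hS hPS hSQ hPR hQR
  have hequilateral : TilesInto (convexHull ℝ {S, Q, R}) N a b c :=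
    heq.of_isTriangle (isTriangle_equilateralTri hnb.le) ⟨S, Q, R, hQR, hSR, hSQ, rfl⟩
  have hscaled : TilesInto (convexHull ℝ {P, S, R}) (n ^ 2) a b c :=
    IsTriangle.tilesInto_sq hn ⟨R, P, S, hPS, (dist_comm R S).trans hSR,
      (dist_comm R P).trans hPR, by rw [Set.insert_comm R P, Set.pair_comm R S]⟩
  have hPQS : S ∈ segment ℝ P Q := mem_segment_iff_wbtw.2 hS.wbtw
  rw [convexHull_triple_eq_union_of_mem_segment hPQS, Set.union_comm]
  exact hequilateral.union hscaled (disjoint_interior_convexHull_of_mem_segment (by simp) hPQS).symm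

theorem stmt16 (a b c : ℕ) (ha : 0 < a) (hb : 0 < b) (hc : 0 < c)
    (hab : Nat.Coprime a b) (hac : Nat.Coprime a c) (hbc : Nat.Coprime b c)
    (h : c ^ 2 = a ^ 2 + b ^ 2 + a * b) (m : ℕ) (hm : 0 < m)
    (heq : TilesInto (EquilateralTri ((m : ℝ) * a * b)) (m ^ 2 * a * b) a b c) :
    ∀ Δ : Set Plane,
      IsTriangle ((m : ℝ) * a * b) ((m : ℝ) * a * c) ((m : ℝ) * a * (a + b)) Δ →
      TilesInto Δ (m ^ 2 * a * (a + b)) a b c := by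
  intro Δ hΔ
  have hcount : m ^ 2 * a * b + (m * a) ^ 2 = m ^ 2 * a * (a + b) := by ring
  rw [← Nat.cast_mul] at heq hΔ
  exact hcount ▸ stmt16_general (Nat.cast_pos.2 ha) (Nat.cast_pos.2 hb) (mod_cast h)
    (Nat.mul_pos hm ha) heq hΔ
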